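/- Let m be a positive integer and let g : F_{2^m} → F_2 be balanced with g(0) = 0. Define f : F_{2^m} × F_{2^m} → F_2 by f(x, y) = g(y·x^{-1}) (by the convention 0^{-1} = 0, one has f(0, y) = g(0) = 0). Then f is bent. -/

import Mathlib

instance : Fact (Nat.Prime 2) := ⟨Nat.prime_two⟩

noncomputable instance (m : ℕ) : Fintype (GaloisField 2 m) := Fintype.ofFinite _

/-- The absolute trace `tr(x) = Σ_{i=0}^{m-1} x^(2^i)`, as an element of the field. -/
noncomputable def trF {m : ℕ} (x : GaloisField 2 m) : GaloisField 2 m :=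
  ∑ i ∈ Finset.range m, x ^ (2 ^ i)

/-- The absolute trace regarded as taking values in `F₂ = ZMod 2`
(its value in the field is always `0` or `1`). -/
noncomputable def tr2 {m : ℕ} (x : GaloisField 2 m) : ZMod 2 :=
  open scoped Classical in
  if trF x = 1 then 1 else 0

theorem tr2_eq_trace {m : ℕ} (hm : 0 < m) (x : GaloisField 2 m) :
    tr2 x = Algebra.trace (ZMod 2) (GaloisField 2 m) x := by
  have h := FiniteField.algebraMap_trace_eq_sum_pow (ZMod 2) (GaloisField 2 m) x
  rw [GaloisField.finrank 2 hm.ne', Nat.card_zmod] at h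
  have h' : trF x = algebraMap (ZMod 2) (GaloisField 2 m)
      (Algebra.trace (ZMod 2) (GaloisField 2 m) x) := h.symm
  unfold tr2
  rw [h']
  generalize Algebra.trace (ZMod 2) (GaloisField 2 m) x = t
  have ht : t = 0 ∨ t = 1 := by revert t; decide
  rcases ht with rfl | rfl <;> simp

theorem sgn_add (a b : ZMod 2) :
    ((-1 : ℤ) ^ (a + b).val) = (-1) ^ a.val * (-1) ^ b.val := by
  revert a b; decide

/-- The additive character `x ↦ (-1)^tr(x)`. -/
noncomputable def chi (m : ℕ) : AddChar (GaloisField 2 m) ℤ where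
  toFun x := (-1 : ℤ) ^ (Algebra.trace (ZMod 2) (GaloisField 2 m) x).val
  map_zero_eq_one' := by simp
  map_add_eq_mul' a b := by rw [map_add, sgn_add]

theorem chi_apply {m : ℕ} (hm : 0 < m) (x : GaloisField 2 m) :
    (-1 : ℤ) ^ (tr2 x).val = chi m x := by
  rw [tr2_eq_trace hm]; rfl

theorem chi_primitive (m : ℕ) : (chi m).IsPrimitive := by
  apply AddChar.IsPrimitive.of_ne_one
  obtain ⟨x, hx⟩ := Algebra.trace_surjective (ZMod 2) (GaloisField 2 m) 1
  refine AddChar.ne_one_iff.2 ⟨x, ?_⟩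
  change (-1 : ℤ) ^ (Algebra.trace (ZMod 2) (GaloisField 2 m) x).val ≠ 1
  rw [hx]
  decide

theorem stmt12 (m : ℕ) (hmpos : 0 < m)
    (g : GaloisField 2 m → ZMod 2)
    (hbal : Nat.card {x : GaloisField 2 m // g x = 1} = 2 ^ (m - 1))
    (hg0 : g 0 = 0)
    (f : GaloisField 2 m × GaloisField 2 m → ZMod 2)
    (hf : ∀ x y, f (x, y) = g (y * x⁻¹)) :
    ∀ u v : GaloisField 2 m,
      |∑ p : GaloisField 2 m × GaloisField 2 m,
          ((-1 : ℤ) ^ (f p + tr2 (u * p.1 + v * p.2)).val)| = 2 ^ m := by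
  classical
  intro u v
  have hcard : Fintype.card (GaloisField 2 m) = 2 ^ m := by
    rw [← Nat.card_eq_fintype_card, GaloisField.card 2 m hmpos.ne']
  have hG : ∑ z : GaloisField 2 m, (-1 : ℤ) ^ (g z).val = 0 := by
    have h1 : ∀ z, (-1 : ℤ) ^ (g z).val = 1 - 2 * (if g z = 1 then 1 else 0) := by
      intro z
      generalize g z = t
      revert t; decide
    rw [Nat.card_eq_fintype_card, Fintype.card_subtype] at hbal
    simp_rw [h1]
    rw [Finset.sum_sub_distrib, ← Finset.mul_sum, Finset.sum_boole, hbal]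
    obtain ⟨k, rfl⟩ : ∃ k, m = k + 1 := ⟨m - 1, by omega⟩
    simp [hcard, pow_succ, mul_comm]
  have key : ∑ p : GaloisField 2 m × GaloisField 2 m,
      ((-1 : ℤ) ^ (f p + tr2 (u * p.1 + v * p.2)).val)
      = (if v = 0 then 2 ^ m else 0)
        + 2 ^ m * ∑ z, if u + v * z = 0 then (-1 : ℤ) ^ (g z).val else 0 := by
    have hx : ∀ x, ∑ y, ((-1 : ℤ) ^ (f (x, y) + tr2 (u * x + v * y)).val)
        = (if x = 0 then ∑ y, chi m (y * v) else 0)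
          + ∑ z, (-1 : ℤ) ^ (g z).val * chi m (x * (u + v * z)) := by
      intro x
      simp_rw [sgn_add, chi_apply hmpos, hf]
      by_cases h : x = 0
      · subst h
        simp [hg0, hG, mul_comm v]
      · simp only [h, if_false, zero_add]
        refine Fintype.sum_equiv (Equiv.mulRight₀ x⁻¹ (inv_ne_zero h)) _ _ fun y => ?_
        simp only [Equiv.mulRight₀_apply]
        congr 2
        field_simp
    rw [Fintype.sum_prod_type]
    simp_rw [hx]
    rw [Finset.sum_add_distrib, Finset.sum_comm (f := fun x z => (-1 : ℤ) ^ (g z).val * _)]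
    simp_rw [← Finset.mul_sum, AddChar.sum_mulShift _ (chi_primitive m), hcard]
    rw [Finset.mul_sum]
    simp [mul_comm]
  rw [key]
  by_cases hv : v = 0
  · subst hv
    by_cases hu : u = 0
    · simp [hu, hG]
    · simp [hu]
  · have : ∀ z, u + v * z = 0 ↔ z = -u * v⁻¹ := by
      intro z
      rw [← div_eq_mul_inv, eq_div_iff hv]
      constructor <;> intro h <;> linear_combination h
    simp_rw [this]
    simp [hv, abs_mul, abs_pow]
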